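/- In the tensor-triangulated adjunction setting described in the context, suppose ⟨G⟩̄_l = 𝒯 for an object G of 𝒯 and some l ≥ 0, and suppose the unit 1_𝒮 belongs to ⟨f_*G⟩̄_n for some n ≥ 0. Then ⟨f_*G⟩̄_{ln} = 𝒮; in particular f_*G is a strong ⊕-generator for 𝒮. -/

import Mathlib

/-!
Tensoring with `X : 𝒮` turns `1 ∈ ⟨f_* G⟩̄ₙ` into `X ∈ ⟨f_* G ⊗ X⟩̄ₙ`. By the projection formula
`f_* G ⊗ X ≅ f_*(G ⊗ f^* X)`, and this object lies in `⟨f_* G⟩̄ₗ` because `G ⊗ f^* X ∈ 𝒯 = ⟨G⟩̄ₗ`.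
So the theorem reduces to the transitivity of levels: `H ∈ ⟨G⟩̄ₗ` and `X ∈ ⟨H⟩̄ₙ` imply
`X ∈ ⟨G⟩̄_{ln}`.

Transitivity is usually deduced from the associativity of extensions, that is from the octahedral
axiom, which `Pretriangulated` does not include. Ghosts replace it. Call a map a `G`-ghost if it is
killed by all maps from shifts of `G`, and an object `n`-ghost-free if every composite of `n` ghosts
out of it vanishes. Ghost-freeness is stable under shifts, coproducts and summands, and adds up
along extensions, which makes transitivity evident once `⟨G⟩̄ₙ` is known to be the class of
`n`-ghost-free objects. For the latter one builds a triangle `W ⟶ X ⟶ Y ⟶ W⟦1⟧` with `W ∈ ⟨G⟩̄ₙ` and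
`X ⟶ Y` a composite of `n` ghosts: if `X` is `n`-ghost-free then `X ⟶ Y` vanishes and `X` is a
summand of `W`.
-/

open CategoryTheory Limits Pretriangulated MonoidalCategory

universe v u v₂ u₂

namespace Stmt

variable {C : Type u} [Category.{v} C]

/-- `X` is a retract (direct summand) of `Y`. -/
def IsRetract (X Y : C) : Prop := ∃ (i : X ⟶ Y) (p : Y ⟶ X), i ≫ p = 𝟙 X

section Big

variable [HasZeroObject C] [Preadditive C] [HasShift C ℤ]
  [∀ n : ℤ, (shiftFunctor C n).Additive] [Pretriangulated C]

/-- The objects of `⟨G⟩̄₁`: the smallest collection of objects containing `G` that is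
closed under shifts, arbitrary small coproducts, and direct summands (retracts). -/
def bigOne (G : C) : Set C :=
  ⋂₀ {S : Set C | G ∈ S ∧ (∀ X ∈ S, ∀ n : ℤ, (X⟦n⟧ : C) ∈ S) ∧
      (∀ (ι : Type v) (f : ι → C) (_ : HasCoproduct f), (∀ i, f i ∈ S) → (∐ f) ∈ S) ∧
      (∀ X Y : C, Y ∈ S → IsRetract X Y → X ∈ S)}

/-- The objects of `⟨G⟩̄ₙ`: `⟨G⟩̄₀` consists of the objects isomorphic to `0`;
`⟨G⟩̄₁` is `bigOne G`; for `n ≥ 2`, `⟨G⟩̄ₙ` consists of the direct summands of objects `E`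
fitting in a distinguished triangle `A ⟶ E ⟶ B ⟶ A⟦1⟧` with `A ∈ ⟨G⟩̄ₙ₋₁` and `B ∈ ⟨G⟩̄₁`. -/
def bigLevel (G : C) : ℕ → Set C
  | 0 => {X | IsZero X}
  | 1 => bigOne G
  | (n + 2) => {X | ∃ (E A B : C) (f : A ⟶ E) (g : E ⟶ B) (h : B ⟶ A⟦(1 : ℤ)⟧),
      (Triangle.mk f g h ∈ distTriang C) ∧ A ∈ bigLevel G (n + 1) ∧ B ∈ bigOne G ∧
      IsRetract X E}

end Big

section Adjunction

/- The tensor-triangulated adjunction setting: `S` (𝒮) and `T` (𝒯) are triangulated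
categories admitting all small coproducts, each equipped with a symmetric monoidal
structure whose tensoring endofunctors are exact and preserve small coproducts;
`F : S ⥤ T` (the functor `f^*`) is an exact strong monoidal functor preserving small
coproducts, with a right adjoint `Fst : T ⥤ S` (the functor `f_*`) which is exact and
preserves small coproducts, satisfying the projection formula
`A ⊗ f_*(B) ≅ f_*(B ⊗ f^*A)`. -/

variable {S : Type u} [Category.{v} S] {T : Type u₂} [Category.{v} T]
  [HasZeroObject S] [Preadditive S] [HasShift S ℤ]
  [∀ n : ℤ, (shiftFunctor S n).Additive] [Pretriangulated S] [HasCoproducts.{v} S]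
  [HasZeroObject T] [Preadditive T] [HasShift T ℤ]
  [∀ n : ℤ, (shiftFunctor T n).Additive] [Pretriangulated T] [HasCoproducts.{v} T]
  [MonoidalCategory S] [SymmetricCategory S] [MonoidalCategory T] [SymmetricCategory T]
  [∀ X : S, (tensorRight X).CommShift ℤ] [∀ X : S, (tensorRight X).IsTriangulated]
  [∀ (X : S) (J : Type v), PreservesColimitsOfShape (Discrete J) (tensorRight X)]
  [∀ X : T, (tensorRight X).CommShift ℤ] [∀ X : T, (tensorRight X).IsTriangulated]
  [∀ (X : T) (J : Type v), PreservesColimitsOfShape (Discrete J) (tensorRight X)]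
  (F : S ⥤ T) [F.Monoidal] [F.CommShift ℤ] [F.IsTriangulated]
  [∀ J : Type v, PreservesColimitsOfShape (Discrete J) F]
  (Fst : T ⥤ S) [Fst.CommShift ℤ] [Fst.IsTriangulated]
  [∀ J : Type v, PreservesColimitsOfShape (Discrete J) Fst]

section Retract

lemma isRetract_iff_nonempty_retract {X Y : C} : IsRetract X Y ↔ Nonempty (Retract X Y) :=
  ⟨fun ⟨i, p, hip⟩ => ⟨⟨i, p, hip⟩⟩, fun ⟨r⟩ => ⟨r.i, r.r, r.retract⟩⟩

lemma IsRetract.refl (X : C) : IsRetract X X :=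
  isRetract_iff_nonempty_retract.2 ⟨.refl X⟩

lemma IsRetract.of_iso {X Y : C} (e : X ≅ Y) : IsRetract X Y :=
  isRetract_iff_nonempty_retract.2 ⟨.ofIso e⟩

lemma IsRetract.trans {X Y Z : C} (hXY : IsRetract X Y) (hYZ : IsRetract Y Z) : IsRetract X Z := by
  rw [isRetract_iff_nonempty_retract] at *
  exact hXY.map2 (fun r r' => r.trans r') hYZ

lemma IsRetract.map {D : Type*} [Category* D] (Φ : C ⥤ D) {X Y : C} (h : IsRetract X Y) :
    IsRetract (Φ.obj X) (Φ.obj Y) := by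
  rw [isRetract_iff_nonempty_retract] at *
  exact h.map (·.map Φ)

lemma IsRetract.isZero [HasZeroMorphisms C] {X Y : C} (h : IsRetract X Y) (hY : IsZero Y) :
    IsZero X := by
  obtain ⟨i, p, hip⟩ := h
  rw [IsZero.iff_id_eq_zero, ← hip, hY.eq_of_tgt i 0, zero_comp]

end Retract

section BigOne

variable [HasShift C ℤ] {G : C}

lemma self_mem_bigOne (G : C) : G ∈ bigOne G := fun _ hP => hP.1

lemma shift_mem_bigOne {X : C} (hX : X ∈ bigOne G) (k : ℤ) : X⟦k⟧ ∈ bigOne G :=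
  fun P hP => hP.2.1 X (hX P hP) k

lemma sigma_mem_bigOne {ι : Type v} (f : ι → C) [HasCoproduct f] (hf : ∀ i, f i ∈ bigOne G) :
    ∐ f ∈ bigOne G :=
  fun P hP => hP.2.2.1 ι f ‹_› fun i => hf i P hP

lemma mem_bigOne_of_isRetract {X Y : C} (hXY : IsRetract X Y) (hY : Y ∈ bigOne G) :
    X ∈ bigOne G :=
  fun P hP => hP.2.2.2 X Y (hY P hP) hXY

@[elab_as_elim]
lemma bigOne_induction {motive : C → Prop} (self : motive G)
    (shift : ∀ (X : C) (k : ℤ), motive X → motive (X⟦k⟧))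
    (sigma : ∀ (ι : Type v) (f : ι → C) [HasCoproduct f], (∀ i, motive (f i)) → motive (∐ f))
    (retract : ∀ X Y : C, IsRetract X Y → motive Y → motive X) {X : C} (hX : X ∈ bigOne G) :
    motive X :=
  hX {X | motive X} ⟨self, fun X hX k => shift X k hX, fun ι f _ hf => sigma ι f hf,
    fun X Y hY hXY => retract X Y hXY hY⟩

end BigOne

section BigLevel

variable [HasZeroObject C] [Preadditive C] [HasShift C ℤ]
  [∀ n : ℤ, (shiftFunctor C n).Additive] [Pretriangulated C] {G : C}

lemma mem_bigLevel_succ_iff {n : ℕ} {X : C} :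
    X ∈ bigLevel G (n + 1) ↔ ∃ (E A B : C) (f : A ⟶ E) (g : E ⟶ B) (h : B ⟶ A⟦(1 : ℤ)⟧),
      Triangle.mk f g h ∈ distTriang C ∧ A ∈ bigLevel G n ∧ B ∈ bigOne G ∧ IsRetract X E := by
  obtain _ | n := n
  · constructor
    · intro hX
      exact ⟨X, _, X, _, _, _, contractible_distinguished₁ X, isZero_zero C, hX, .refl X⟩
    · rintro ⟨E, A, B, f, g, h, hT, hA, hB, hXE⟩
      have : IsIso g := (Triangle.isZero₁_iff_isIso₂ _ hT).1 hA
      exact mem_bigOne_of_isRetract (hXE.trans (.of_iso (asIso g))) hB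
  · rfl

lemma mem_bigLevel_succ_of_distTriang {A E B : C} {n : ℕ} {f : A ⟶ E} {g : E ⟶ B}
    {h : B ⟶ A⟦(1 : ℤ)⟧} (hT : Triangle.mk f g h ∈ distTriang C) (hA : A ∈ bigLevel G n)
    (hB : B ∈ bigOne G) : E ∈ bigLevel G (n + 1) :=
  mem_bigLevel_succ_iff.2 ⟨E, A, B, f, g, h, hT, hA, hB, .refl E⟩

lemma mem_bigLevel_of_isRetract {n : ℕ} {X Y : C} (hXY : IsRetract X Y) (hY : Y ∈ bigLevel G n) :
    X ∈ bigLevel G n := by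
  obtain _ | n := n
  · exact hXY.isZero hY
  · obtain ⟨E, A, B, f, g, h, hT, hA, hB, hYE⟩ := mem_bigLevel_succ_iff.1 hY
    exact mem_bigLevel_succ_iff.2 ⟨E, A, B, f, g, h, hT, hA, hB, hXY.trans hYE⟩

end BigLevel

section Ghost

variable [HasZeroMorphisms C] [HasShift C ℤ] {G : C}

/-- A `G`-ghost is a map killed by precomposition with every map from a shift of `G`. -/
def IsGhost (G : C) {X Y : C} (φ : X ⟶ Y) : Prop :=
  ∀ (k : ℤ) (g : G⟦k⟧ ⟶ X), g ≫ φ = 0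

/-- The `n`-fold composites of `G`-ghosts, that is the `n`-th power of the ideal of `G`-ghosts.
The zeroth power consists of all maps. -/
def IsIteratedGhost (G : C) : ℕ → ∀ {X Y : C}, (X ⟶ Y) → Prop
  | 0, _, _, _ => True
  | n + 1, X, Y, φ => ∃ (Z : C) (a : X ⟶ Z) (b : Z ⟶ Y),
      IsIteratedGhost G n a ∧ IsGhost G b ∧ a ≫ b = φ

/-- `X` is `n`-ghost-free for `G` if every `n`-fold composite of `G`-ghosts out of `X` vanishes. -/
def IsGhostFree (G : C) (n : ℕ) (X : C) : Prop :=
  ∀ ⦃Y : C⦄ (φ : X ⟶ Y), IsIteratedGhost G n φ → φ = 0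

lemma IsGhost.precomp {W X Y : C} {φ : X ⟶ Y} (hφ : IsGhost G φ) (w : W ⟶ X) :
    IsGhost G (w ≫ φ) :=
  fun k g => by rw [← Category.assoc, hφ]

lemma IsGhost.postcomp {X Y Z : C} {φ : X ⟶ Y} (hφ : IsGhost G φ) (z : Y ⟶ Z) :
    IsGhost G (φ ≫ z) :=
  fun k g => by rw [← Category.assoc, hφ, zero_comp]

lemma isIteratedGhost_one_iff {X Y : C} {φ : X ⟶ Y} : IsIteratedGhost G 1 φ ↔ IsGhost G φ := by
  refine ⟨?_, fun hφ => ⟨X, 𝟙 X, φ, trivial, hφ, Category.id_comp φ⟩⟩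
  rintro ⟨Z, a, b, -, hb, rfl⟩
  exact hb.precomp a

lemma IsIteratedGhost.precomp {n : ℕ} {W X Y : C} {φ : X ⟶ Y} (hφ : IsIteratedGhost G n φ)
    (w : W ⟶ X) : IsIteratedGhost G n (w ≫ φ) := by
  induction n generalizing Y with
  | zero => trivial
  | succ n ih =>
    obtain ⟨Z, a, b, ha, hb, rfl⟩ := hφ
    exact ⟨Z, w ≫ a, b, ih ha, hb, Category.assoc w a b⟩

lemma IsIteratedGhost.exists_eq_comp_of_add {m n : ℕ} {X Y : C} {φ : X ⟶ Y}
    (hφ : IsIteratedGhost G (m + n) φ) :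
    ∃ (Z : C) (a : X ⟶ Z) (b : Z ⟶ Y),
      IsIteratedGhost G m a ∧ IsIteratedGhost G n b ∧ φ = a ≫ b := by
  induction n generalizing Y with
  | zero => exact ⟨Y, φ, 𝟙 Y, hφ, trivial, (Category.comp_id φ).symm⟩
  | succ n ih =>
    obtain ⟨Z, ψ, c, hψ, hc, rfl⟩ := hφ
    obtain ⟨Z', a, b, ha, hb, rfl⟩ := ih hψ
    exact ⟨Z', a, b ≫ c, ha, ⟨Z, b, c, hb, hc, rfl⟩, Category.assoc a b c⟩

lemma isGhostFree_zero_iff {X : C} : IsGhostFree G 0 X ↔ IsZero X :=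
  ⟨fun hX => (IsZero.iff_id_eq_zero X).2 (hX _ trivial), fun hX _ _ _ => hX.eq_of_src _ _⟩

lemma isGhostFree_one_self (G : C) : IsGhostFree G 1 G := by
  intro Y φ hφ
  exact zero_of_epi_comp _ (isIteratedGhost_one_iff.1 hφ 0 ((shiftFunctorZero C ℤ).hom.app G))

lemma IsGhostFree.of_isRetract {n : ℕ} {X Y : C} (hXY : IsRetract X Y) (hY : IsGhostFree G n Y) :
    IsGhostFree G n X := by
  obtain ⟨i, p, hip⟩ := hXY
  intro Z φ hφ
  rw [← Category.id_comp φ, ← hip, Category.assoc, hY _ (hφ.precomp p), comp_zero]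

lemma IsGhostFree.sigma {n : ℕ} {ι : Type*} {f : ι → C} [HasCoproduct f]
    (hf : ∀ i, IsGhostFree G n (f i)) : IsGhostFree G n (∐ f) := by
  intro Y φ hφ
  refine Limits.Sigma.hom_ext _ _ fun i => ?_
  rw [hf i _ (hφ.precomp _), comp_zero]

section Shift

variable [∀ n : ℤ, (shiftFunctor C n).PreservesZeroMorphisms]

lemma IsGhost.shift {X Y : C} {φ : X ⟶ Y} (hφ : IsGhost G φ) (k : ℤ) : IsGhost G (φ⟦k⟧') := by
  intro m g
  let e : G⟦m⟧ ≅ G⟦m - k⟧⟦k⟧ := (shiftFunctorAdd' C (m - k) k m (sub_add_cancel m k)).app G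
  obtain ⟨g', hg'⟩ := (shiftFunctor C k).map_surjective (e.inv ≫ g)
  rw [← e.hom_inv_id_assoc g, ← hg', Category.assoc, ← Functor.map_comp, hφ, Functor.map_zero,
    comp_zero]

lemma IsIteratedGhost.shift {n : ℕ} {X Y : C} {φ : X ⟶ Y} (hφ : IsIteratedGhost G n φ) (k : ℤ) :
    IsIteratedGhost G n (φ⟦k⟧') := by
  induction n generalizing Y with
  | zero => trivial
  | succ n ih =>
    obtain ⟨Z, a, b, ha, hb, rfl⟩ := hφ
    exact ⟨Z⟦k⟧, a⟦k⟧', b⟦k⟧', ih ha, hb.shift k, (Functor.map_comp _ a b).symm⟩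

lemma IsGhostFree.shift {n : ℕ} {X : C} (hX : IsGhostFree G n X) (k : ℤ) :
    IsGhostFree G n (X⟦k⟧) := by
  intro Y φ hφ
  have hφ' : φ⟦-k⟧' = 0 :=
    zero_of_epi_comp _ (hX _ ((hφ.shift (-k)).precomp (shiftShiftNeg X k).inv))
  exact (Functor.map_eq_zero_iff _).1 hφ'

lemma IsGhostFree.of_mem_bigOne {n : ℕ} {H X : C} (hH : IsGhostFree G n H) (hX : X ∈ bigOne H) :
    IsGhostFree G n X :=
  bigOne_induction hH (fun _ k hX => hX.shift k) (fun _ _ _ hf => .sigma hf)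
    (fun _ _ hXY hY => hY.of_isRetract hXY) hX

end Shift

end Ghost

section GhostFreeLevel

variable [HasZeroObject C] [Preadditive C] [HasShift C ℤ]
  [∀ n : ℤ, (shiftFunctor C n).Additive] [Pretriangulated C] {G : C}

lemma IsGhostFree.add_of_distTriang {m n : ℕ} {A E B : C} {f : A ⟶ E} {g : E ⟶ B}
    {h : B ⟶ A⟦(1 : ℤ)⟧} (hT : Triangle.mk f g h ∈ distTriang C) (hA : IsGhostFree G m A)
    (hB : IsGhostFree G n B) : IsGhostFree G (m + n) E := by
  intro Y φ hφ
  obtain ⟨Z, a, b, ha, hb, rfl⟩ := hφ.exists_eq_comp_of_add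
  obtain ⟨t, rfl⟩ : ∃ t : B ⟶ Z, a = g ≫ t :=
    Triangle.yoneda_exact₂ _ hT a (hA _ (ha.precomp f))
  rw [Category.assoc, hB _ (hb.precomp t), comp_zero]

lemma IsGhostFree.mul_of_mem_bigLevel {H X : C} {l n : ℕ} (hH : IsGhostFree G l H)
    (hX : X ∈ bigLevel H n) : IsGhostFree G (l * n) X := by
  induction n generalizing X with
  | zero => exact isGhostFree_zero_iff.2 hX
  | succ n ih =>
    obtain ⟨E, A, B, f, g, h, hT, hA, hB, hXE⟩ := mem_bigLevel_succ_iff.1 hX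
    exact ((ih hA).add_of_distTriang hT (hH.of_mem_bigOne hB)).of_isRetract hXE

lemma isGhostFree_of_mem_bigLevel {n : ℕ} {X : C} (hX : X ∈ bigLevel G n) : IsGhostFree G n X := by
  simpa only [one_mul] using (isGhostFree_one_self G).mul_of_mem_bigLevel hX

/-- A substitute for the octahedral axiom, which would moreover identify `Y'` with `Z` and `γ'` with
`γ ≫ g`. -/
lemma exists_distTriang_comp_factorization {W X Y P Z : C} {α : W ⟶ X} {γ : X ⟶ Y}
    {δ : Y ⟶ W⟦(1 : ℤ)⟧} (hT : Triangle.mk α γ δ ∈ distTriang C) {f : P ⟶ Y} {g : Y ⟶ Z}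
    {h : Z ⟶ P⟦(1 : ℤ)⟧} (hP : Triangle.mk f g h ∈ distTriang C) :
    ∃ (E Y' : C) (j : W ⟶ E) (p : E ⟶ P) (α' : E ⟶ X) (γ' : X ⟶ Y') (δ' : Y' ⟶ E⟦(1 : ℤ)⟧)
      (c : Z ⟶ Y'), Triangle.mk j p (f ≫ δ) ∈ distTriang C ∧
        Triangle.mk α' γ' δ' ∈ distTriang C ∧ γ' = γ ≫ g ≫ c := by
  obtain ⟨E, j, p, hE⟩ := distinguished_cocone_triangle₂ (f ≫ δ)
  obtain ⟨α', hjα', hα'γ⟩ : ∃ α' : E ⟶ X, j ≫ α' = 𝟙 W ≫ α ∧ p ≫ f = α' ≫ γ :=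
    complete_distinguished_triangle_morphism₂ _ _ hE hT (𝟙 W) f
      (show (f ≫ δ) ≫ (𝟙 W)⟦(1 : ℤ)⟧' = f ≫ δ by simp)
  obtain ⟨Y', γ', δ', hT'⟩ := distinguished_cocone_triangle α'
  have hα'γ' : α' ≫ γ' = 0 := comp_distTriang_mor_zero₁₂ _ hT'
  have hγδ : γ ≫ δ = 0 := comp_distTriang_mor_zero₂₃ _ hT
  obtain ⟨b, rfl⟩ : ∃ b : Y ⟶ Y', γ' = γ ≫ b :=
    Triangle.yoneda_exact₂ _ hT γ' (show α ≫ γ' = 0 by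
      rw [← Category.id_comp α, ← hjα', Category.assoc, hα'γ', comp_zero])
  obtain ⟨e, he⟩ : ∃ e : W⟦(1 : ℤ)⟧ ⟶ Y', f ≫ b = (f ≫ δ) ≫ e :=
    Triangle.yoneda_exact₃ _ hE (f ≫ b) (show p ≫ f ≫ b = 0 by
      rw [reassoc_of% hα'γ, hα'γ'])
  -- Correcting `b` by `δ ≫ e` does not change `γ ≫ b`, and makes it vanish on `P`.
  obtain ⟨c, hc⟩ : ∃ c : Z ⟶ Y', b - δ ≫ e = g ≫ c :=
    Triangle.yoneda_exact₂ _ hP (b - δ ≫ e) (show f ≫ (b - δ ≫ e) = 0 by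
      rw [Preadditive.comp_sub, he, Category.assoc, sub_self])
  refine ⟨E, Y', j, p, α', γ ≫ b, δ', c, hE, hT', ?_⟩
  rw [← hc, Preadditive.comp_sub, reassoc_of% hγδ, zero_comp, sub_zero]

lemma exists_distTriang_isGhost [HasCoproducts.{v} C] (G X : C) :
    ∃ (P Y : C) (f : P ⟶ X) (g : X ⟶ Y) (h : Y ⟶ P⟦(1 : ℤ)⟧),
      Triangle.mk f g h ∈ distTriang C ∧ P ∈ bigOne G ∧ IsGhost G g := by
  let shifts : (Σ k : ℤ, (G⟦k⟧ ⟶ X)) → C := fun x => G⟦x.1⟧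
  let ev : ∐ shifts ⟶ X := Limits.Sigma.desc fun x => x.2
  obtain ⟨Y, g, h, hT⟩ := distinguished_cocone_triangle ev
  have hev : ev ≫ g = 0 := comp_distTriang_mor_zero₁₂ _ hT
  refine ⟨∐ shifts, Y, ev, g, h, hT,
    sigma_mem_bigOne shifts fun x => shift_mem_bigOne (self_mem_bigOne G) x.1, fun k φ => ?_⟩
  have hφ : Limits.Sigma.ι shifts ⟨k, φ⟩ ≫ ev = φ := Limits.Sigma.ι_desc _ _
  rw [← hφ, Category.assoc, hev, comp_zero]

lemma exists_distTriang_isIteratedGhost [HasCoproducts.{v} C] (G : C) (n : ℕ) (X : C) :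
    ∃ (W Y : C) (α : W ⟶ X) (γ : X ⟶ Y) (δ : Y ⟶ W⟦(1 : ℤ)⟧),
      Triangle.mk α γ δ ∈ distTriang C ∧ W ∈ bigLevel G n ∧ IsIteratedGhost G n γ := by
  induction n with
  | zero => exact ⟨_, X, _, 𝟙 X, _, contractible_distinguished₁ X, isZero_zero C, trivial⟩
  | succ n ih =>
    obtain ⟨W, Y, α, γ, δ, hT, hW, hγ⟩ := ih
    obtain ⟨P, Z, f, g, h, hPT, hP, hg⟩ := exists_distTriang_isGhost G Y
    obtain ⟨E, Y', j, p, α', γ', δ', c, hE, hT', hγ'⟩ :=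
      exists_distTriang_comp_factorization hT hPT
    exact ⟨E, Y', α', γ', δ', hT', mem_bigLevel_succ_of_distTriang hE hW hP,
      Y, γ, g ≫ c, hγ, hg.postcomp c, hγ'.symm⟩

theorem mem_bigLevel_iff_isGhostFree [HasCoproducts.{v} C] {n : ℕ} {X : C} :
    X ∈ bigLevel G n ↔ IsGhostFree G n X := by
  refine ⟨isGhostFree_of_mem_bigLevel, fun hX => ?_⟩
  obtain ⟨W, Y, α, γ, δ, hT, hW, hγ⟩ := exists_distTriang_isIteratedGhost G n X
  obtain ⟨s, hs⟩ : ∃ s : X ⟶ W, 𝟙 X = s ≫ α :=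
    Triangle.coyoneda_exact₂ _ hT (𝟙 X) (show 𝟙 X ≫ γ = 0 by rw [hX γ hγ, comp_zero])
  exact mem_bigLevel_of_isRetract ⟨s, α, hs.symm⟩ hW

theorem mem_bigLevel_mul [HasCoproducts.{v} C] {H X : C} {l n : ℕ} (hH : H ∈ bigLevel G l)
    (hX : X ∈ bigLevel H n) : X ∈ bigLevel G (l * n) :=
  mem_bigLevel_iff_isGhostFree.2 ((isGhostFree_of_mem_bigLevel hH).mul_of_mem_bigLevel hX)

end GhostFreeLevel

section ExactFunctor

variable {D : Type u₂} [Category.{v} D]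

lemma map_mem_bigOne [HasShift C ℤ] [HasShift D ℤ] (Φ : C ⥤ D) [Φ.CommShift ℤ]
    [∀ J : Type v, PreservesColimitsOfShape (Discrete J) Φ] {G X : C} (hX : X ∈ bigOne G) :
    Φ.obj X ∈ bigOne (Φ.obj G) := by
  refine bigOne_induction (motive := fun X => Φ.obj X ∈ bigOne (Φ.obj G)) (self_mem_bigOne _)
    (fun X k hX => ?shift) (fun ι f _ hf => ?sigma) (fun X Y hXY hY => ?retract) hX
  case shift =>
    exact mem_bigOne_of_isRetract (.of_iso ((Φ.commShiftIso k).app X)) (shift_mem_bigOne hX k)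
  case sigma =>
    have : HasCoproduct fun i => Φ.obj (f i) :=
      ⟨⟨_, isColimitOfHasCoproductOfPreservesColimit Φ f⟩⟩
    exact mem_bigOne_of_isRetract (.of_iso (PreservesCoproduct.iso Φ f)) (sigma_mem_bigOne _ hf)
  case retract => exact mem_bigOne_of_isRetract (hXY.map Φ) hY

variable [HasZeroObject C] [Preadditive C] [HasShift C ℤ]
  [∀ n : ℤ, (shiftFunctor C n).Additive] [Pretriangulated C]
  [HasZeroObject D] [Preadditive D] [HasShift D ℤ]
  [∀ n : ℤ, (shiftFunctor D n).Additive] [Pretriangulated D]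

lemma map_mem_bigLevel (Φ : C ⥤ D) [Φ.CommShift ℤ] [Φ.IsTriangulated]
    [∀ J : Type v, PreservesColimitsOfShape (Discrete J) Φ] {G X : C} {n : ℕ}
    (hX : X ∈ bigLevel G n) : Φ.obj X ∈ bigLevel (Φ.obj G) n := by
  induction n generalizing X with
  | zero => exact Φ.map_isZero hX
  | succ n ih =>
    obtain ⟨E, A, B, f, g, h, hT, hA, hB, hXE⟩ := mem_bigLevel_succ_iff.1 hX
    exact mem_bigLevel_of_isRetract (hXE.map Φ)
      (mem_bigLevel_succ_of_distTriang (Φ.map_distinguished _ hT) (ih hA) (map_mem_bigOne Φ hB))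

lemma mem_bigLevel_tensor_of_unit_mem [MonoidalCategory C] (X : C) [(tensorRight X).CommShift ℤ]
    [(tensorRight X).IsTriangulated]
    [∀ J : Type v, PreservesColimitsOfShape (Discrete J) (tensorRight X)] {H : C} {n : ℕ}
    (hH : 𝟙_ C ∈ bigLevel H n) : X ∈ bigLevel (H ⊗ X) n :=
  mem_bigLevel_of_isRetract (.of_iso (λ_ X).symm) (map_mem_bigLevel (tensorRight X) hH)

theorem statement6_general [HasCoproducts.{v} D] [MonoidalCategory D]
    [∀ X : D, (tensorRight X).CommShift ℤ] [∀ X : D, (tensorRight X).IsTriangulated]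
    [∀ (X : D) (J : Type v), PreservesColimitsOfShape (Discrete J) (tensorRight X)]
    (Φ : C ⥤ D) [Φ.CommShift ℤ] [Φ.IsTriangulated]
    [∀ J : Type v, PreservesColimitsOfShape (Discrete J) Φ] (G : C)
    (hΦ : ∀ X : D, Φ.essImage (Φ.obj G ⊗ X)) (l n : ℕ)
    (hl : bigLevel G l = (Set.univ : Set C)) (hn : 𝟙_ D ∈ bigLevel (Φ.obj G) n) :
    bigLevel (Φ.obj G) (l * n) = (Set.univ : Set D) := by
  refine Set.eq_univ_of_forall fun X => ?_
  obtain ⟨Y, ⟨e⟩⟩ := hΦ X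
  have hY : Y ∈ bigLevel G l := hl ▸ Set.mem_univ Y
  have hGX : Φ.obj G ⊗ X ∈ bigLevel (Φ.obj G) l :=
    mem_bigLevel_of_isRetract (.of_iso e.symm) (map_mem_bigLevel Φ hY)
  exact mem_bigLevel_mul hGX (mem_bigLevel_tensor_of_unit_mem X hn)

end ExactFunctor

/--
in the tensor-triangulated adjunction setting, if `⟨G⟩̄ₗ = 𝒯` and
`1_𝒮 ∈ ⟨f_* G⟩̄ₙ`, then `⟨f_* G⟩̄_{ln} = 𝒮`; in particular `f_* G` is a strong
⊕-generator for 𝒮.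
-/
theorem statement6 (adj : F ⊣ Fst)
    (proj : ∀ (A : S) (B : T), Nonempty ((A ⊗ Fst.obj B) ≅ Fst.obj (B ⊗ F.obj A)))
    (G : T) (l n : ℕ) (hl : bigLevel G l = (Set.univ : Set T))
    (hn : (𝟙_ S) ∈ bigLevel (Fst.obj G) n) :
    bigLevel (Fst.obj G) (l * n) = (Set.univ : Set S) ∧
      ∃ m : ℕ, bigLevel (Fst.obj G) m = (Set.univ : Set S) := by
  have h := statement6_general Fst G
    (fun X => ⟨G ⊗ F.obj X, (proj X G).map fun e => (β_ _ X ≪≫ e).symm⟩) l n hl hn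
  exact ⟨h, l * n, h⟩

end Adjunction

end Stmt
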